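/- arXiv:2412.16608 — 5 statements merged into one kernel-verified Lean document; each statement's English description precedes it below -/
import Mathlib

section
/- Let γ > 0 and K > 0, let h : (0,∞) → [0,∞) satisfy h(s) ≤ s^(−γ) for all s > 0, and let κ : [0,∞) → [0,∞) be continuous, non-decreasing, with κ(0) = 0. Then there exist ε₀ > 0, Λ > 0 and λ̄ ∈ (0, Λ) such that for every ε ∈ (0, ε₀), every λ ∈ (0, λ̄], every t ∈ [0, K·Λ^(1/γ)] and every s ≥ 0 one has Λ·(s + 1) ≥ (λ·h(t + ε)·s + κ(t))·(t + ε)^γ. -/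
/-! Write `Λ = r ^ γ` and take `ε₀ = r`, so that `t + ε ≤ (K + 1) r` and hence
`(t + ε) ^ γ ≤ (K + 1) ^ γ * Λ`. By continuity of `κ` at `0`, `r` can be chosen so small that
`κ (K r) * (K + 1) ^ γ ≤ 1`; monotonicity then bounds the `κ` term by `Λ`. The bound
`h x ≤ x ^ (-γ)` makes the other term at most `λ s ≤ Λ s`, whatever `r` is. -/

/-- The real-variable core of the supersolution lemma: if `h s ≤ s^(-γ)` for `s > 0`
and `κ` is continuous, non-decreasing with `κ 0 = 0`, then there are `ε₀ > 0`, `Λ > 0`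
and `λ̄ ∈ (0, Λ)` such that for all `ε ∈ (0, ε₀)`, `λ ∈ (0, λ̄]`, `t ∈ [0, K·Λ^(1/γ)]`
and `s ≥ 0` one has `Λ·(s+1) ≥ (λ·h(t+ε)·s + κ t)·(t+ε)^γ`. -/
theorem exists_supersolution_bounds
    (γ K : ℝ) (hγ : 0 < γ) (hK : 0 < K)
    (h : ℝ → ℝ) (hh : ∀ s : ℝ, 0 < s → 0 ≤ h s ∧ h s ≤ s ^ (-γ))
    (κ : ℝ → ℝ) (hκcont : ContinuousOn κ (Set.Ici 0))
    (hκmono : MonotoneOn κ (Set.Ici 0))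
    (hκ0 : κ 0 = 0) (hκnonneg : ∀ s : ℝ, 0 ≤ s → 0 ≤ κ s) :
    ∃ ε₀ > 0, ∃ Λ > 0, ∃ lamBar, 0 < lamBar ∧ lamBar < Λ ∧
      ∀ ε ∈ Set.Ioo (0:ℝ) ε₀, ∀ lam ∈ Set.Ioc (0:ℝ) lamBar,
        ∀ t ∈ Set.Icc (0:ℝ) (K * Λ ^ (1/γ)), ∀ s : ℝ, 0 ≤ s →
          (lam * h (t + ε) * s + κ t) * (t + ε) ^ γ ≤ Λ * (s + 1) := by
  have hC : 0 < (K + 1) ^ γ := Real.rpow_pos_of_pos (by linarith) γ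
  obtain ⟨δ, hδ, hκδ⟩ := Metric.continuousWithinAt_iff.1 (hκcont 0 Set.self_mem_Ici)
    ((K + 1) ^ γ)⁻¹ (inv_pos.2 hC)
  obtain ⟨r, hr, hKr⟩ : ∃ r > 0, K * r < δ :=
    ⟨δ / (2 * K), by positivity, by field_simp; linarith⟩
  have hKr0 : 0 ≤ K * r := by positivity
  have hκr : κ (K * r) ≤ ((K + 1) ^ γ)⁻¹ := by
    have hd := hκδ (x := K * r) hKr0 (by rwa [Real.dist_0_eq_abs, abs_of_nonneg hKr0])
    rw [hκ0, Real.dist_0_eq_abs] at hd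
    exact (le_abs_self _).trans hd.le
  have hΛ : 0 < r ^ γ := Real.rpow_pos_of_pos hr γ
  have hroot : (r ^ γ) ^ (1 / γ) = r := by
    rw [one_div, Real.rpow_rpow_inv hr.le hγ.ne']
  refine ⟨r, hr, r ^ γ, hΛ, r ^ γ / 2, by linarith, by linarith, ?_⟩
  rintro ε ⟨hε, hεr⟩ lam ⟨hlam, hlamle⟩ t ⟨ht, htr⟩ s hs
  rw [hroot] at htr
  have hx : 0 < t + ε := by linarith
  have hP : 0 < (t + ε) ^ γ := Real.rpow_pos_of_pos hx γ
  have hh1 : h (t + ε) * (t + ε) ^ γ ≤ 1 := by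
    calc h (t + ε) * (t + ε) ^ γ ≤ (t + ε) ^ (-γ) * (t + ε) ^ γ :=
          mul_le_mul_of_nonneg_right (hh _ hx).2 hP.le
      _ = 1 := by rw [Real.rpow_neg hx.le, inv_mul_cancel₀ hP.ne']
  have hPle : (t + ε) ^ γ ≤ (K + 1) ^ γ * r ^ γ := by
    rw [← Real.mul_rpow (by linarith) hr.le]
    exact Real.rpow_le_rpow hx.le (by linarith) hγ.le
  have hκt : κ t * (t + ε) ^ γ ≤ r ^ γ := by
    calc κ t * (t + ε) ^ γ ≤ ((K + 1) ^ γ)⁻¹ * ((K + 1) ^ γ * r ^ γ) :=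
          mul_le_mul ((hκmono ht hKr0 htr).trans hκr) hPle hP.le (inv_pos.2 hC).le
      _ = r ^ γ := inv_mul_cancel_left₀ hC.ne' _
  calc (lam * h (t + ε) * s + κ t) * (t + ε) ^ γ
      = lam * s * (h (t + ε) * (t + ε) ^ γ) + κ t * (t + ε) ^ γ := by ring
    _ ≤ lam * s * 1 + r ^ γ := by gcongr
    _ ≤ r ^ γ * s + r ^ γ := by
      rw [mul_one]
      gcongr
      linarith
    _ = r ^ γ * (s + 1) := by ring
end

section
/- Let N ≥ 2, let M > N − 1, set c = M − (N − 1) > 0, and work in E = EuclideanSpace ℝ (Fin N). Define u : E → ℝ by u(y) = c·‖y‖⁻¹ and z : E → E by z(y) = −‖y‖⁻¹ • y. Then for every x ≠ 0: (i) ‖z(x)‖ = 1; (ii) z(x) = ∇u(x)/‖∇u(x)‖, where ∇u is the gradient of u; (iii) −div z(x) + u(x) = M/‖x‖, where div z(x) denotes the trace of the Fréchet derivative of z at x. -/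
/-!
Everything follows from one derivative: away from the origin, `y ↦ ‖y‖⁻¹` has Fréchet derivative
`-‖x‖⁻³ ⟪x, ·⟫` at `x` (`hasFDerivAt_inv_norm`). Thus `∇u(x) = -c ‖x‖⁻³ x`, a negative multiple of
`x` because `c > 0`, and normalizing it gives `z x = -x / ‖x‖`. By the product rule, `Dz(x)` is
`-‖x‖⁻¹` times the identity plus the rank-one map `v ↦ ‖x‖⁻³ ⟪x, v⟫ x`, whose trace is `‖x‖⁻¹`;
hence `div z(x) = -(N - 1) / ‖x‖`, and adding `u x = c / ‖x‖` to its negative gives `M / ‖x‖`.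
-/

theorem hasFDerivAt_inv_norm {E : Type*} [NormedAddCommGroup E] [InnerProductSpace ℝ E]
    {x : E} (hx : x ≠ 0) :
    HasFDerivAt (fun y : E => ‖y‖⁻¹) (-(‖x‖ ^ 3)⁻¹ • innerSL ℝ x) x := by
  have hn : ‖x‖ ≠ 0 := norm_ne_zero_iff.mpr hx
  -- The norm is differentiated as the square root of the smooth function `‖y‖ ^ 2`.
  have h1 : HasFDerivAt (fun y : E => √(‖y‖ ^ 2)) _ x :=
    (hasStrictFDerivAt_norm_sq x).hasFDerivAt.sqrt (pow_ne_zero 2 hn)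
  simp only [Real.sqrt_sq (norm_nonneg _)] at h1
  have h2 := (hasDerivAt_inv hn).comp_hasFDerivAt x h1
  refine h2.congr_fderiv ?_
  ext v
  simp
  field_simp

/-- The paper's explicit example: for `N ≥ 2`, `M > N - 1` and `c = M - (N - 1)`, the
functions `u(y) = c·‖y‖⁻¹` and `z(y) = -‖y‖⁻¹ • y` satisfy, at every `x ≠ 0`:
`‖z x‖ = 1`, `z x = ∇u(x)/‖∇u(x)‖`, and `-div z(x) + u(x) = M/‖x‖`, where
`div z(x)` is the trace of the Fréchet derivative of `z` at `x`. -/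
theorem radial_solution_absorption_example
    (N : ℕ) (hN : 2 ≤ N) (M : ℝ) (hM : (N : ℝ) - 1 < M)
    (c : ℝ) (hc : c = M - ((N : ℝ) - 1))
    (u : EuclideanSpace ℝ (Fin N) → ℝ)
    (hu : ∀ y, u y = c * ‖y‖⁻¹)
    (z : EuclideanSpace ℝ (Fin N) → EuclideanSpace ℝ (Fin N))
    (hz : ∀ y, z y = -(‖y‖⁻¹ • y))
    (x : EuclideanSpace ℝ (Fin N)) (hx : x ≠ 0) :
    ‖z x‖ = 1 ∧
      z x = ‖gradient u x‖⁻¹ • gradient u x ∧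
      DifferentiableAt ℝ z x ∧
      -(LinearMap.trace ℝ (EuclideanSpace ℝ (Fin N)) (fderiv ℝ z x).toLinearMap)
          + u x = M / ‖x‖ := by
  have hn : 0 < ‖x‖ := norm_pos_iff.mpr hx
  have hc0 : 0 < c := by linarith
  obtain rfl : u = fun y => c * ‖y‖⁻¹ := funext hu
  obtain rfl : z = fun y => -(‖y‖⁻¹ • y) := funext hz
  have hinv := hasFDerivAt_inv_norm hx
  have hgrad : gradient (fun y : EuclideanSpace ℝ (Fin N) => c * ‖y‖⁻¹) x
      = -((c * (‖x‖ ^ 3)⁻¹) • x) := by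
    apply HasGradientAt.gradient
    rw [hasGradientAt_iff_hasFDerivAt]
    refine (hinv.const_mul c).congr_fderiv ?_
    ext v
    simp
    ring
  have hdz := (hinv.smul (hasFDerivAt_id x)).neg
  refine ⟨?_, ?_, hdz.differentiableAt, ?_⟩
  · simp [norm_smul, hn.ne']
  · rw [hgrad, norm_neg, norm_smul, Real.norm_of_nonneg (by positivity), smul_neg, smul_smul]
    field_simp
  · have htr : LinearMap.trace ℝ (EuclideanSpace ℝ (Fin N))
        (fderiv ℝ (fun y : EuclideanSpace ℝ (Fin N) => -(‖y‖⁻¹ • y)) x).toLinearMap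
        = -(‖x‖⁻¹ * N - (‖x‖ ^ 3)⁻¹ * ‖x‖ ^ 2) := by
      have hmap : (fderiv ℝ (fun y : EuclideanSpace ℝ (Fin N) => -(‖y‖⁻¹ • y)) x).toLinearMap
          = -(‖x‖⁻¹ • LinearMap.id
            - (‖x‖ ^ 3)⁻¹ • (innerSL ℝ x).toLinearMap.smulRight x) := by
        have hf : fderiv ℝ (fun y : EuclideanSpace ℝ (Fin N) => -(‖y‖⁻¹ • y)) x = _ :=
          hdz.fderiv
        rw [hf]
        refine LinearMap.ext fun v => ?_
        simp [smul_smul, sub_eq_add_neg, add_comm]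
      rw [hmap]
      simp [LinearMap.trace_smulRight]
    rw [htr, hc]
    field_simp
    ring
end

section
/- Let N ≥ 1 and R > 0, work in EuclideanSpace ℝ (Fin N), let μ be Lebesgue measure restricted to Metric.ball 0 R, and let ω_N = volume(Metric.ball 0 1). For h > 0 define f_h = ({x : h < ‖x‖⁻¹}).indicator (fun x => ‖x‖⁻¹). Then for every h > 0 the weak-L^N quasinorm wnorm f_h N μ = ⨆_{t : ℝ≥0} t · μ({x : t < ‖f_h x‖})^(1/N) equals ω_N^(1/N); in particular wnorm f_h N μ does not tend to 0 as h → ∞. -/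
/-!
For `t ≥ max h R⁻¹` the superlevel set `{|f_h| > t}` is the punctured ball of radius `t⁻¹`, which
lies in `B_R(0)`, and for every `t > 0` it is contained in that ball. Since Lebesgue measure scales like
the `N`-th power of the radius, `t · |B_{t⁻¹}(0)|^(1/N)` does not depend on `t > 0`
(`mul_volume_ball_inv_rpow`). Hence the supremum defining the quasinorm is bounded by, and attained
with, the value `ω_N^(1/N)`, whatever `h` is.
-/

open MeasureTheory Filter
open scoped ENNReal NNReal

theorem mul_volume_ball_inv_rpow (N : ℕ) (hN : 1 ≤ N) (t : ℝ≥0) (ht : 0 < t) :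
    (t : ℝ≥0∞) * volume (Metric.ball (0 : EuclideanSpace ℝ (Fin N)) (t : ℝ)⁻¹) ^ ((1 : ℝ) / N)
      = volume (Metric.ball (0 : EuclideanSpace ℝ (Fin N)) 1) ^ ((1 : ℝ) / N) := by
  have ht' : (0 : ℝ) < t := by exact_mod_cast ht
  have hN0 : N ≠ 0 := by omega
  have ht0 : (t : ℝ≥0∞) ≠ 0 := by exact_mod_cast ht.ne'
  rw [Measure.addHaar_ball_of_pos volume _ (inv_pos.2 ht'), finrank_euclideanSpace_fin,
    ENNReal.mul_rpow_of_nonneg _ _ (by positivity), ENNReal.ofReal_pow (by positivity),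
    ENNReal.ofReal_inv_of_pos ht', ENNReal.ofReal_coe_nnreal, one_div,
    ENNReal.pow_rpow_inv_natCast hN0, ← mul_assoc,
    ENNReal.mul_inv_cancel ht0 ENNReal.coe_ne_top, one_mul]

/-- For `f_h = χ_{{‖x‖⁻¹ > h}}·‖x‖⁻¹` on the ball `B_R(0) ⊆ ℝ^N`, the weak-`L^N`
quasinorm of `f_h` equals `ω_N^(1/N)` for every `h > 0`; in particular it does not
tend to `0` as `h → ∞`. -/
theorem wnorm_truncated_inv_norm_ball
    (N : ℕ) (hN : 1 ≤ N) (R : ℝ) (hR : 0 < R)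
    (μ : Measure (EuclideanSpace ℝ (Fin N)))
    (hμ : μ = volume.restrict (Metric.ball (0 : EuclideanSpace ℝ (Fin N)) R))
    (f : ℝ → EuclideanSpace ℝ (Fin N) → ℝ)
    (hf : ∀ h : ℝ, f h =
      ({x : EuclideanSpace ℝ (Fin N) | h < ‖x‖⁻¹}).indicator (fun x => ‖x‖⁻¹)) :
    (∀ h : ℝ, 0 < h →
        (⨆ t : ℝ≥0, (t : ℝ≥0∞) * μ {x | (t : ℝ) < ‖f h x‖} ^ ((1 : ℝ) / N))
          = volume (Metric.ball (0 : EuclideanSpace ℝ (Fin N)) 1) ^ ((1 : ℝ) / N)) ∧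
      ¬ Tendsto
          (fun h : ℝ =>
            ⨆ t : ℝ≥0, (t : ℝ≥0∞) * μ {x | (t : ℝ) < ‖f h x‖} ^ ((1 : ℝ) / N))
          atTop (nhds 0) := by
  have key : ∀ h : ℝ, 0 < h →
      (⨆ t : ℝ≥0, (t : ℝ≥0∞) * μ {x | (t : ℝ) < ‖f h x‖} ^ ((1 : ℝ) / N))
        = volume (Metric.ball (0 : EuclideanSpace ℝ (Fin N)) 1) ^ ((1 : ℝ) / N) := by
    intro h hh
    apply le_antisymm
    · refine iSup_le fun t => ?_
      rcases eq_or_lt_of_le (zero_le (a := t)) with rfl | ht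
      · simp
      rw [← mul_volume_ball_inv_rpow N hN t ht]
      have hsub : {x | (t : ℝ) < ‖f h x‖} ⊆
          Metric.ball (0 : EuclideanSpace ℝ (Fin N)) (t : ℝ)⁻¹ := by
        intro x hx
        have ht' : (0 : ℝ) < t := by exact_mod_cast ht
        have hx1 : (t : ℝ) < ‖x‖⁻¹ := by
          have hx2 : (t : ℝ) < ‖f h x‖ := hx
          rw [hf h] at hx2
          simpa using hx2.trans_le (norm_indicator_le_norm_self _ x)
        have hpos : 0 < ‖x‖ := inv_pos.1 (ht'.trans hx1)
        rw [mem_ball_zero_iff]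
        exact (lt_inv_comm₀ ht' hpos).1 hx1
      have hle : μ {x | (t : ℝ) < ‖f h x‖} ≤
          volume (Metric.ball (0 : EuclideanSpace ℝ (Fin N)) (t : ℝ)⁻¹) := by
        rw [hμ]
        exact (Measure.restrict_apply_le _ _).trans (measure_mono hsub)
      exact mul_le_mul_right (ENNReal.rpow_le_rpow hle (by positivity)) _
    -- the supremum is attained at `t = max h R⁻¹`
    · obtain ⟨t, ht⟩ : ∃ t : ℝ≥0, (t : ℝ) = max h R⁻¹ :=
        ⟨⟨max h R⁻¹, hh.le.trans (le_max_left _ _)⟩, rfl⟩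
      have hth : h ≤ t := ht ▸ le_max_left _ _
      have htR : R⁻¹ ≤ t := ht ▸ le_max_right _ _
      have ht' : (0 : ℝ) < t := hh.trans_le hth
      refine le_trans ?_ (le_iSup _ t)
      rw [← mul_volume_ball_inv_rpow N hN t (by exact_mod_cast ht')]
      refine mul_le_mul_right (ENNReal.rpow_le_rpow ?_ (by positivity)) _
      have : Nonempty (Fin N) := ⟨⟨0, hN⟩⟩
      -- the origin has to be removed: `f h 0 = 0` because `0⁻¹ = 0`
      rw [← measure_sdiff_null (s := Metric.ball (0 : EuclideanSpace ℝ (Fin N)) (t : ℝ)⁻¹)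
        (measure_singleton (0 : EuclideanSpace ℝ (Fin N)))]
      rw [hμ, Measure.restrict_apply' measurableSet_ball]
      refine measure_mono ?_
      rintro x ⟨hx, hx0⟩
      rw [mem_ball_zero_iff] at hx
      have hpos : 0 < ‖x‖ := norm_pos_iff.2 hx0
      have hx1 : (t : ℝ) < ‖x‖⁻¹ := (lt_inv_comm₀ hpos ht').1 hx
      refine ⟨?_, ?_⟩
      · have hmem : x ∈ {x : EuclideanSpace ℝ (Fin N) | h < ‖x‖⁻¹} := hth.trans_lt hx1
        change (t : ℝ) < ‖f h x‖
        rw [hf h, Set.indicator_of_mem hmem]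
        simpa using hx1
      · rw [mem_ball_zero_iff]
        exact hx.trans_le (inv_le_of_inv_le₀ hR htR)
  refine ⟨key, fun hlim => ?_⟩
  have hconst := hlim.congr' ((eventually_gt_atTop 0).mono key)
  have h0 := (tendsto_nhds_unique hconst tendsto_const_nhds).symm
  have hN' : (0 : ℝ) < 1 / N := by
    have : (0 : ℝ) < N := by exact_mod_cast hN
    positivity
  rw [ENNReal.rpow_eq_zero_iff_of_pos hN'] at h0
  exact (Metric.measure_ball_pos volume _ one_pos).ne' h0
end

section
/- Let (Ω, μ) be a measure space and let u₁, u₂, f₁, f₂ : Ω → ℝ be measurable with (f₁ − f₂)·(u₁ − u₂)⁺ integrable with respect to μ. Assume: (i) f₁(x) < f₂(x) for μ-a.e. x in the set {x : u₁(x) > u₂(x)}; (ii) for every k > 0, ∫_Ω (f₁ − f₂)·T_k((u₁ − u₂)⁺) dμ ≥ 0, where T_k(s) = max(−k, min(s, k)). Then u₁ ≤ u₂ μ-a.e. in Ω. -/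
/-!
A single truncation level suffices; `k = 1` is used throughout. The integrand is integrable
because `|T₁ s| ≤ |s|`. Where `u₁ ≤ u₂` it vanishes, and elsewhere it is a.e. negative since
`f₁ < f₂` there. A nonpositive integrable function with nonnegative integral is a.e. zero
(`integral_eq_zero_iff_of_nonneg_ae`), so `{u₁ > u₂}` is null.
-/

open MeasureTheory

/-- Measure-theoretic core of the weak comparison principle: if `f₁ < f₂` a.e. on
`{u₁ > u₂}`, `(f₁ - f₂)·(u₁ - u₂)⁺` is integrable, and for every `k > 0` one has
`∫ (f₁ - f₂)·T_k((u₁ - u₂)⁺) dμ ≥ 0` with `T_k s = max (-k) (min s k)`,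
then `u₁ ≤ u₂` a.e. -/
theorem ae_le_of_truncation_integrals_nonneg
    {Ω : Type*} [MeasurableSpace Ω] (μ : Measure Ω)
    (u₁ u₂ f₁ f₂ : Ω → ℝ)
    (hu₁ : Measurable u₁) (hu₂ : Measurable u₂)
    (hf₁ : Measurable f₁) (hf₂ : Measurable f₂)
    (hint : Integrable (fun x => (f₁ x - f₂ x) * max (u₁ x - u₂ x) 0) μ)
    (hlt : ∀ᵐ x ∂μ, u₂ x < u₁ x → f₁ x < f₂ x)
    (hk : ∀ k : ℝ, 0 < k →
      0 ≤ ∫ x, (f₁ x - f₂ x) * max (-k) (min (max (u₁ x - u₂ x) 0) k) ∂μ) :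
    ∀ᵐ x ∂μ, u₁ x ≤ u₂ x := by
  have hI : Integrable
      (fun x => (f₁ x - f₂ x) * max (-1) (min (max (u₁ x - u₂ x) 0) 1)) μ := by
    refine hint.mono (by fun_prop) (.of_forall fun x => ?_)
    rw [norm_mul, norm_mul]
    refine mul_le_mul_of_nonneg_left ?_ (norm_nonneg _)
    have h0 : 0 ≤ max (u₁ x - u₂ x) 0 := le_max_right _ _
    have h1 : 0 ≤ min (max (u₁ x - u₂ x) 0) 1 := le_min h0 zero_le_one
    rw [max_eq_right (by linarith), Real.norm_of_nonneg h1, Real.norm_of_nonneg h0]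
    exact min_le_left _ _
  have hneg : 0 ≤ᵐ[μ]
      fun x => -((f₁ x - f₂ x) * max (-1) (min (max (u₁ x - u₂ x) 0) 1)) := by
    filter_upwards [hlt] with x hx
    rcases le_or_gt (u₁ x) (u₂ x) with h | h
    · simp [max_eq_right (sub_nonpos.2 h)]
    · have h1 : 0 ≤ max (-1) (min (max (u₁ x - u₂ x) 0) 1) :=
        le_max_of_le_right (le_min (le_max_right _ _) zero_le_one)
      exact neg_nonneg.2 (mul_nonpos_of_nonpos_of_nonneg (sub_neg.2 (hx h)).le h1)
  have hzero : ∫ x, -((f₁ x - f₂ x) * max (-1) (min (max (u₁ x - u₂ x) 0) 1)) ∂μ = 0 := by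
    refine le_antisymm ?_ (integral_nonneg_of_ae hneg)
    rw [integral_neg]
    exact neg_nonpos.2 (hk 1 one_pos)
  filter_upwards [hlt, (integral_eq_zero_iff_of_nonneg_ae hneg hI.neg).1 hzero] with x hx hx0
  by_contra! h
  have h1 : 0 < max (-1) (min (max (u₁ x - u₂ x) 0) 1) :=
    lt_max_of_lt_right (lt_min (lt_max_of_lt_left (sub_pos.2 h)) one_pos)
  exact (mul_neg_of_neg_of_pos (sub_neg.2 (hx h)) h1).ne (neg_eq_zero.1 hx0)
end

section
/- Let (Ω, μ) be a measure space, let u₁, u₂ : Ω → ℝ be measurable, and let l : Ω × ℝ → ℝ be such that x ↦ l(x, u₁(x)) and x ↦ l(x, u₂(x)) are measurable and, for μ-a.e. x, the function s ↦ l(x, s) is strictly increasing. Fix k > 0 and set T_k(s) = max(−k, min(s, k)). Assume that the function x ↦ (l(x, u₁(x)) − l(x, u₂(x)))·T_k((u₁(x) − u₂(x))⁺) is integrable and that ∫_Ω (l(x, u₁(x)) − l(x, u₂(x)))·T_k((u₁(x) − u₂(x))⁺) dμ ≤ 0. Then u₁ ≤ u₂ μ-a.e. in Ω. -/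
/-!
The integrand is a.e. nonnegative: where `u₁ ≤ u₂` the truncated positive part vanishes, and
elsewhere both factors are nonnegative by monotonicity of `l x`. An integrable a.e. nonnegative
function with nonpositive integral vanishes a.e. (`integral_eq_zero_iff_of_nonneg_ae`), whereas
strict monotonicity and `k > 0` make the integrand positive on `{u₁ > u₂}`; so that set is null.
-/

open MeasureTheory

/-- Measure-theoretic core of the strong comparison principle: if `l(x,·)` is a.e.
strictly increasing and, for some fixed `k > 0`,
`∫ (l(x,u₁) - l(x,u₂))·T_k((u₁ - u₂)⁺) dμ ≤ 0` with `T_k s = max (-k) (min s k)`,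
then `u₁ ≤ u₂` a.e. -/
theorem ae_le_of_strictMono_truncation_integral_nonpos
    {Ω : Type*} [MeasurableSpace Ω] (μ : Measure Ω)
    (u₁ u₂ : Ω → ℝ) (hu₁ : Measurable u₁) (hu₂ : Measurable u₂)
    (l : Ω → ℝ → ℝ)
    (hl₁ : Measurable (fun x => l x (u₁ x)))
    (hl₂ : Measurable (fun x => l x (u₂ x)))
    (hmono : ∀ᵐ x ∂μ, StrictMono (l x))
    (k : ℝ) (hk : 0 < k)
    (hint : Integrable
      (fun x => (l x (u₁ x) - l x (u₂ x)) *
        max (-k) (min (max (u₁ x - u₂ x) 0) k)) μ)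
    (hle : (∫ x, (l x (u₁ x) - l x (u₂ x)) *
        max (-k) (min (max (u₁ x - u₂ x) 0) k) ∂μ) ≤ 0) :
    ∀ᵐ x ∂μ, u₁ x ≤ u₂ x := by
  have hnn : 0 ≤ᵐ[μ] fun x => (l x (u₁ x) - l x (u₂ x)) *
      max (-k) (min (max (u₁ x - u₂ x) 0) k) := by
    filter_upwards [hmono] with x hx
    rcases le_total (u₁ x) (u₂ x) with h | h
    · -- the positive part, hence its truncation, vanishes
      simp [max_eq_right (sub_nonpos.2 h), hk.le]
    · exact mul_nonneg (sub_nonneg.2 (hx.monotone h))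
        (le_max_of_le_right (le_min (le_max_right _ _) hk.le))
  have hzero := (integral_eq_zero_iff_of_nonneg_ae hnn hint).1
    (le_antisymm hle (integral_nonneg_of_ae hnn))
  filter_upwards [hmono, hzero] with x hx h0
  by_contra! h
  -- where `u₁ x > u₂ x`, both factors of the integrand are positive
  exact (mul_pos (sub_pos.2 (hx h))
    (lt_max_of_lt_right (lt_min (lt_max_of_lt_left (sub_pos.2 h)) hk))).ne' h0
end
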